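/- The discrete spectrum of the partial integral operator T₁ is empty: σ_disc(T₁) = ∅. -/

import Mathlib

open MeasureTheory Complex

noncomputable section

/-- The measure on `ℝ` given by restricting Lebesgue measure to `[a,b]`. -/
abbrev muI (a b : ℝ) : MeasureTheory.Measure ℝ :=
  MeasureTheory.volume.restrict (Set.Icc a b)

/-- The discrete spectrum of a bounded operator: the set of isolated points of the
spectrum which are eigenvalues of finite multiplicity. -/
def discreteSpectrum {E : Type*} [NormedAddCommGroup E] [NormedSpace ℂ E]
    (T : E →L[ℂ] E) : Set ℂ :=
  {z : ℂ | z ∈ spectrum ℂ T ∧ nhdsWithin z (spectrum ℂ T \ {z}) = ⊥ ∧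
    LinearMap.ker ((T - z • (1 : E →L[ℂ] E) : E →L[ℂ] E) : E →ₗ[ℂ] E) ≠ ⊥ ∧
    FiniteDimensional ℂ ↥(LinearMap.ker ((T - z • (1 : E →L[ℂ] E) : E →L[ℂ] E) : E →ₗ[ℂ] E))}

/-! An operator on `L²([a,b] × [c,d])` that acts only in `x` commutes with multiplication by every
bounded function of `y`, in particular by an injective one. So every eigenspace is invariant
under that multiplication, and if it were nonzero and finite-dimensional it would contain an
eigenvector of the multiplication. Such an eigenvector is supported on a single fibre
`{y = const}`, which is a null set. -/

open scoped ENNReal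

section CommutingOperators

theorem exists_hasEigenvalue_of_mem_invtSubmodule {K V : Type*} [Field K] [IsAlgClosed K]
    [AddCommGroup V] [Module K V] {M : Module.End K V} {W : Submodule K V}
    [FiniteDimensional K W] (hW : W ≠ ⊥) (hMW : W ∈ M.invtSubmodule) :
    ∃ c, M.HasEigenvalue c := by
  have : Nontrivial W := Submodule.nontrivial_iff_ne_bot.mpr hW
  obtain ⟨c, hc⟩ := Module.End.exists_eigenvalue (M.restrict hMW)
  obtain ⟨v, hv⟩ := hc.exists_hasEigenvector
  refine ⟨c, Module.End.hasEigenvalue_of_hasEigenvector (x := (v : V)) ⟨?_, ?_⟩⟩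
  · exact Module.End.eigenspace_restrict_le_eigenspace M hMW c (Submodule.mem_map_of_mem hv.1)
  · simpa only [ne_eq, ZeroMemClass.coe_eq_zero] using hv.2

theorem ker_mem_invtSubmodule_of_commute {R V : Type*} [Semiring R] [AddCommMonoid V] [Module R V]
    {A M : Module.End R V} (hAM : Commute A M) : LinearMap.ker A ∈ M.invtSubmodule := by
  intro v hv
  rw [LinearMap.mem_ker] at hv
  rw [Submodule.mem_comap, LinearMap.mem_ker, ← Module.End.mul_apply, hAM.eq,
    Module.End.mul_apply, hv, map_zero]

theorem discreteSpectrum_eq_empty_of_commute {E : Type*} [NormedAddCommGroup E] [NormedSpace ℂ E]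
    {T : E →L[ℂ] E} {M : Module.End ℂ E} (hTM : Commute (T : Module.End ℂ E) M)
    (hM : ∀ c, ¬ M.HasEigenvalue c) : discreteSpectrum T = ∅ := by
  rw [Set.eq_empty_iff_forall_notMem]
  rintro w ⟨-, -, hker, hfin⟩
  have hcomm : Commute ((T - w • (1 : E →L[ℂ] E) : E →L[ℂ] E) : Module.End ℂ E) M :=
    hTM.sub_left ((Commute.one_left M).smul_left w)
  obtain ⟨c, hc⟩ :=
    exists_hasEigenvalue_of_mem_invtSubmodule hker (ker_mem_invtSubmodule_of_commute hcomm)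
  exact hM c hc

end CommutingOperators

section Multiplication

variable {Z E : Type*} [MeasurableSpace Z] {κ : Measure Z} [NormedAddCommGroup E] [NormedSpace ℂ E]
  {p : ℝ≥0∞}

variable (E p) in
/-- Multiplication by the `L^∞` function `g`, as an endomorphism of `L^p`. -/
def multiplicationOperator (g : Lp ℂ ∞ κ) : Module.End ℂ (Lp E p κ) where
  toFun f := g • f
  map_add' := Lp.add_smul g
  map_smul' c f := (Lp.smul_comm c g f).symm

theorem coeFn_multiplicationOperator_toLp {g : Z → ℂ} (hg : MemLp g ∞ κ) (f : Lp E p κ) :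
    multiplicationOperator E p (hg.toLp g) f =ᵐ[κ] fun z => g z • f z := by
  filter_upwards [Lp.coeFn_lpSMul (r := p) (hg.toLp g) f, hg.coeFn_toLp] with z hmul hcoe
  change (hg.toLp g • f : Lp E p κ) z = _
  rw [hmul, Pi.smul_apply', hcoe]

theorem not_hasEigenvalue_multiplicationOperator {g : Z → ℂ} (hg : MemLp g ∞ κ) {c : ℂ}
    (hc : ∀ᵐ z ∂κ, g z ≠ c) : ¬ (multiplicationOperator E p (hg.toLp g)).HasEigenvalue c := by
  intro hev
  obtain ⟨f, hf⟩ := hev.exists_hasEigenvector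
  refine hf.2 (Lp.ext ?_)
  have hmul := coeFn_multiplicationOperator_toLp hg f
  rw [hf.apply_eq_smul] at hmul
  filter_upwards [hmul, Lp.coeFn_smul c f, Lp.coeFn_zero E p κ, hc] with z hmulz hsmul hzero hne
  rw [hsmul, Pi.smul_apply] at hmulz
  rw [hzero, Pi.zero_apply]
  have hdiff : (g z - c) • f z = 0 := by rw [sub_smul, hmulz, sub_self]
  exact (smul_eq_zero.mp hdiff).resolve_left (sub_ne_zero.mpr hne)

end Multiplication

section Decomposable

variable {Z Y E : Type*} [MeasurableSpace Z] {κ : Measure Z} [NormedAddCommGroup E]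
  [NormedSpace ℂ E] {p : ℝ≥0∞} [Fact (1 ≤ p)]

/-- A bounded operator on `L^p(κ)` is decomposable over the base of `π : Z → Y` if it acts fibre by
fibre. As for von Neumann's direct integrals, this is expressed as commutation with multiplication
by all essentially bounded functions that factor through `π`, so that no family of operators
on the fibres has to be chosen. -/
def IsDecomposable (π : Z → Y) (T : Lp E p κ →L[ℂ] Lp E p κ) : Prop :=
  ∀ (g : Y → ℂ) (hg : MemLp (g ∘ π) ∞ κ),
    Commute (T : Module.End ℂ (Lp E p κ)) (multiplicationOperator E p (hg.toLp (g ∘ π)))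

theorem exists_measurable_injective_norm_le (Y : Type*) [MeasurableSpace Y]
    [MeasurableSpace.CountablySeparated Y] :
    ∃ g : Y → ℂ, Measurable g ∧ Function.Injective g ∧ ∃ C : ℝ, ∀ y, ‖g y‖ ≤ C := by
  obtain ⟨e, he, he_inj⟩ := MeasurableSpace.measurable_injection_nat_bool_of_countablySeparated Y
  obtain ⟨ι, hι⟩ := exists_measurableEmbedding_real (ℕ → Bool)
  refine ⟨fun y => (Real.arctan (ι (e y)) : ℂ), ?_, ?_, Real.pi / 2, fun y => ?_⟩
  · exact Complex.measurable_ofReal.comp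
      (Real.measurable_arctan.comp (hι.measurable.comp he))
  · exact Complex.ofReal_injective.comp
      (Real.arctan_injective.comp (hι.injective.comp he_inj))
  · rw [Complex.norm_real, Real.norm_eq_abs]
    exact abs_le.mpr ⟨(Real.neg_pi_div_two_lt_arctan _).le, (Real.arctan_lt_pi_div_two _).le⟩

theorem statement4_general [MeasurableSpace Y] [MeasurableSpace.CountablySeparated Y]
    {π : Z → Y} (hπ : AEMeasurable π κ) (hfibre : ∀ y, ∀ᵐ z ∂κ, π z ≠ y)
    {T : Lp E p κ →L[ℂ] Lp E p κ} (hT : IsDecomposable π T) : discreteSpectrum T = ∅ := by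
  obtain ⟨g, hg_meas, hg_inj, C, hC⟩ := exists_measurable_injective_norm_le Y
  have hg : MemLp (g ∘ π) ∞ κ :=
    memLp_top_of_bound (hg_meas.comp_aemeasurable hπ).aestronglyMeasurable C
      (.of_forall fun z => hC (π z))
  have hlevel : ∀ c, ∀ᵐ z ∂κ, (g ∘ π) z ≠ c := by
    intro c
    by_cases hc : c ∈ Set.range g
    · obtain ⟨y, rfl⟩ := hc
      filter_upwards [hfibre y] with z hz
      exact hg_inj.ne hz
    · exact .of_forall fun z hz => hc ⟨π z, hz⟩
  exact discreteSpectrum_eq_empty_of_commute (hT g hg) fun c =>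
    not_hasEigenvalue_multiplicationOperator hg (hlevel c)

end Decomposable

section PartialIntegral

variable {X Y E : Type*} [MeasurableSpace X] [MeasurableSpace Y] {μ : Measure X} {ν : Measure Y}
  [SFinite μ] [SFinite ν]

theorem ae_ae_fibre_of_ae_prod {P : X × Y → Prop} (hP : ∀ᵐ z ∂μ.prod ν, P z) :
    ∀ᵐ z ∂μ.prod ν, ∀ᵐ s ∂μ, P (s, z.2) := by
  have hswap : ∀ᵐ z ∂ν.prod μ, P z.swap :=
    Measure.measurePreserving_swap.quasiMeasurePreserving.ae hP
  exact Measure.quasiMeasurePreserving_snd.ae (Measure.ae_ae_of_ae_prod hswap)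

theorem isDecomposable_snd_of_ae_eq_integral [NormedAddCommGroup E] [NormedSpace ℂ E]
    {p : ℝ≥0∞} [Fact (1 ≤ p)] (K : X × Y → X → ℂ)
    {T : Lp E p (μ.prod ν) →L[ℂ] Lp E p (μ.prod ν)}
    (hT : ∀ f, ∀ᵐ z ∂μ.prod ν, T f z = ∫ s, K z s • f (s, z.2) ∂μ) :
    IsDecomposable Prod.snd T := by
  intro g hg
  have hmul := coeFn_multiplicationOperator_toLp (E := E) (p := p) hg
  set M := multiplicationOperator E p (hg.toLp (g ∘ Prod.snd))
  refine LinearMap.ext fun f => Lp.ext ?_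
  change T (M f) =ᵐ[_] M (T f)
  filter_upwards [hT (M f), hT f, hmul (T f), ae_ae_fibre_of_ae_prod (hmul f)]
    with z hTMf hTf hMTf hMf
  calc T (M f) z = ∫ s, K z s • M f (s, z.2) ∂μ := hTMf
    _ = ∫ s, g z.2 • K z s • f (s, z.2) ∂μ := by
      refine integral_congr_ae ?_
      filter_upwards [hMf] with s hs
      rw [hs, smul_comm, Function.comp_apply]
    _ = g z.2 • ∫ s, K z s • f (s, z.2) ∂μ := integral_smul _ _
    _ = M (T f) z := by rw [hMTf, hTf, Function.comp_apply]

end PartialIntegral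

theorem statement4
    (a b c d : ℝ) (hab : a < b) (hcd : c < d)
    (n : ℕ) (hn : 1 ≤ n)
    (φ : Fin n → ℝ → ℂ)
    (hφL2 : ∀ k, MemLp (φ k) 2 (muI a b))
    (hφON : ∀ i j, ∫ x, star (φ i x) * φ j x ∂(muI a b) = if i = j then 1 else 0)
    (h : Fin n → ℝ → ℝ)
    (hhmeas : ∀ k, Measurable (h k))
    (hhbdd : ∀ k, ∃ C : ℝ, ∀ᵐ y ∂(muI c d), |h k y| ≤ C)
    (T1 : Lp ℂ 2 ((muI a b).prod (muI c d)) →L[ℂ] Lp ℂ 2 ((muI a b).prod (muI c d)))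
    (hT1sa : IsSelfAdjoint T1)
    (hT1 : ∀ f : Lp ℂ 2 ((muI a b).prod (muI c d)),
      ∀ᵐ z ∂((muI a b).prod (muI c d)),
        T1 f z = ∫ s, (∑ k, φ k z.1 * star (φ k s) * (h k z.2 : ℂ)) * f (s, z.2) ∂(muI a b)) :
    discreteSpectrum T1 = ∅ := by
  exact statement4_general measurable_snd.aemeasurable
    (fun y => Measure.quasiMeasurePreserving_snd.ae (Measure.ae_ne _ y))
    (isDecomposable_snd_of_ae_eq_integral _ hT1)
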